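/- Let d > 0, c ∈ ℝ and q ∈ ℕ with q ≥ 4. There exists a constant C ≥ 1, depending only on d, c and q, such that the following holds for every t ≥ 0 and δ ∈ (0,1]: if z is measurable on ℝ × [0,t], z(·,s) ∈ L¹(ℝ,ℂ) ∩ L^∞(ℝ,ℂ) for each s ∈ [0,t], and ‖z(·,s)‖_{L¹} ≤ δ (1+s)^{−1/2} and ‖z(·,s)‖_{L^∞} ≤ δ for all s ∈ [0,t], then for j ∈ {0,1}: ∫_ℝ |k|^j | ∫_0^t e^{−k² d (t−s) + i c k s} z^{*q}(k,s) ds | dk ≤ C δ² (1+t)^{−(1+j)/2}. -/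

import Mathlib

open MeasureTheory Real

noncomputable section

/-- convolution on `ℝ`. -/
def conv (f g : ℝ → ℂ) : ℝ → ℂ := fun k => ∫ ξ : ℝ, f (k - ξ) * g ξ

/-- `convIter f m` is the `(m+1)`-fold convolution power of `f`;
in particular `convIter f (q-1) = f^{*q}` for `q ≥ 1`. -/
def convIter (f : ℝ → ℂ) : ℕ → ℝ → ℂ
  | 0 => f
  | m + 1 => conv (convIter f m) f

/-- `e^{x + iy}` for real `x, y`. -/
def expc (x y : ℝ) : ℂ := Complex.exp (Complex.ofReal x + Complex.ofReal y * Complex.I)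

open scoped ENNReal

theorem enorm_conv_le (f g : ℝ → ℂ) (k : ℝ) :
    ‖conv f g k‖ₑ ≤ ∫⁻ ξ, ‖f (k - ξ)‖ₑ * ‖g ξ‖ₑ :=
  (enorm_integral_le_lintegral_enorm _).trans_eq (by simp only [enorm_mul])

theorem lintegral_enorm_conv_le {f g : ℝ → ℂ} (hf : Measurable f) (hg : Measurable g) :
    ∫⁻ k, ‖conv f g k‖ₑ ≤ (∫⁻ k, ‖f k‖ₑ) * ∫⁻ k, ‖g k‖ₑ := by
  calc ∫⁻ k, ‖conv f g k‖ₑ ≤ ∫⁻ k, ∫⁻ ξ, ‖f (k - ξ)‖ₑ * ‖g ξ‖ₑ :=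
        lintegral_mono fun k => enorm_conv_le f g k
    _ = ∫⁻ ξ, ∫⁻ k, ‖f (k - ξ)‖ₑ * ‖g ξ‖ₑ :=
        lintegral_lintegral_swap (by unfold Function.uncurry; fun_prop)
    _ = ∫⁻ ξ, (∫⁻ k, ‖f k‖ₑ) * ‖g ξ‖ₑ := by
        refine lintegral_congr fun ξ => ?_
        rw [lintegral_mul_const _ (by fun_prop),
          lintegral_sub_right_eq_self (fun k => ‖f k‖ₑ) ξ]
    _ = _ := lintegral_const_mul _ (by fun_prop)

theorem enorm_conv_le_of_ae_le {f g : ℝ → ℂ} (hg : Measurable g) {A : ℝ≥0∞}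
    (hA : ∀ᵐ k, ‖f k‖ₑ ≤ A) (k : ℝ) : ‖conv f g k‖ₑ ≤ A * ∫⁻ ξ, ‖g ξ‖ₑ := by
  refine (enorm_conv_le f g k).trans ?_
  rw [← lintegral_const_mul _ (by fun_prop)]
  refine lintegral_mono_ae ?_
  filter_upwards [(quasiMeasurePreserving_sub_left volume k).ae hA] with ξ hξ
  gcongr

theorem measurable_uncurry_convIter {z : ℝ → ℝ → ℂ} (hz : Measurable (Function.uncurry z)) :
    ∀ m, Measurable (Function.uncurry fun s k => convIter (z s) m k)
  | 0 => hz
  | m + 1 => by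
    have ih := measurable_uncurry_convIter hz m
    have h : Measurable fun p : (ℝ × ℝ) × ℝ =>
        convIter (z p.1.1) m (p.1.2 - p.2) * z p.1.1 p.2 :=
      (ih.comp (f := fun p : (ℝ × ℝ) × ℝ => (p.1.1, p.1.2 - p.2)) (by fun_prop)).mul
        (hz.comp (f := fun p : (ℝ × ℝ) × ℝ => (p.1.1, p.2)) (by fun_prop))
    exact h.stronglyMeasurable.integral_prod_right.measurable

theorem measurable_convIter {f : ℝ → ℂ} (hf : Measurable f) (m : ℕ) :
    Measurable (convIter f m) :=
  (measurable_uncurry_convIter (z := fun _ => f) (hf.comp measurable_snd) m).comp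
    (measurable_prodMk_left (x := (0 : ℝ)))

theorem lintegral_enorm_convIter_le {f : ℝ → ℂ} (hf : Measurable f) (m : ℕ) :
    ∫⁻ k, ‖convIter f m k‖ₑ ≤ (∫⁻ k, ‖f k‖ₑ) ^ (m + 1) := by
  induction m with
  | zero => simp [convIter]
  | succ m ih =>
    rw [pow_succ]
    exact (lintegral_enorm_conv_le (measurable_convIter hf m) hf).trans (by gcongr)

theorem ae_enorm_convIter_le {f : ℝ → ℂ} (hf : Measurable f) {A : ℝ≥0∞}
    (hA : ∀ᵐ k, ‖f k‖ₑ ≤ A) (m : ℕ) :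
    ∀ᵐ k, ‖convIter f m k‖ₑ ≤ A * (∫⁻ k, ‖f k‖ₑ) ^ m := by
  induction m with
  | zero => simpa [convIter] using hA
  | succ m ih =>
    refine .of_forall fun k => ?_
    rw [pow_succ, ← mul_assoc]
    exact enorm_conv_le_of_ae_le hf ih k

theorem norm_expc (x y : ℝ) : ‖expc x y‖ = exp x := by
  simp [expc, Complex.norm_exp]

theorem abs_mul_exp_neg_mul_sq_le {b : ℝ} (hb : 0 < b) (k : ℝ) :
    |k| * exp (-b * k ^ 2) ≤ 1 / √b := by
  have hs := sqrt_pos.2 hb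
  have h1 : √b * |k| ≤ exp (b * k ^ 2) := by
    have h2 := add_one_le_exp (b * k ^ 2)
    have h3 : b * k ^ 2 = (√b * |k|) ^ 2 := by rw [mul_pow, sq_sqrt hb.le, sq_abs]
    nlinarith [sq_nonneg (√b * |k| - 1)]
  rw [neg_mul, exp_neg, ← div_eq_mul_inv, div_le_div_iff₀ (exp_pos _) hs]
  linarith

theorem lintegral_gaussian {b : ℝ} (hb : 0 < b) :
    ∫⁻ k : ℝ, ENNReal.ofReal (exp (-b * k ^ 2)) = ENNReal.ofReal √(π / b) := by
  rw [← integral_gaussian, ofReal_integral_eq_lintegral_ofReal (integrable_exp_neg_mul_sq hb)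
    (.of_forall fun k => (exp_pos _).le)]

/-- The heat multiplier weighted by `|k| ^ j`, `j ≤ 1`, at time `τ`: pointwise and `L¹` bounds. -/
theorem exists_heat_weight_bounds {d : ℝ} (hd : 0 < d) :
    ∃ B : ℝ, 1 ≤ B ∧ ∀ j : ℕ, j ≤ 1 → ∀ τ : ℝ, 0 < τ →
      (∀ k : ℝ, |k| ^ j * exp (-(k ^ 2 * d * τ)) ≤ B * (1 / √τ) ^ j) ∧
      ∫⁻ k : ℝ, ENNReal.ofReal (|k| ^ j * exp (-(k ^ 2 * d * τ))) ≤
        ENNReal.ofReal (B * (1 / √τ) ^ (j + 1)) := by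
  refine ⟨1 + 1 / √d + √(π / d) + 1 / √(d / 2) * √(π / (d / 2)), ?_, fun j hj τ hτ => ?_⟩
  · have : 0 ≤ 1 / √d + √(π / d) + 1 / √(d / 2) * √(π / (d / 2)) := by positivity
    linarith
  have hdτ : 0 < d * τ := by positivity
  have e1 : 0 ≤ 1 / √d := by positivity
  have e2 : 0 ≤ √(π / d) := by positivity
  have e3 : 0 ≤ 1 / √(d / 2) * √(π / (d / 2)) := by positivity
  have hrw (k : ℝ) : -(k ^ 2 * d * τ) = -(d * τ) * k ^ 2 := by ring
  simp only [hrw]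
  interval_cases j
  · simp only [pow_zero, one_mul, mul_one, zero_add, pow_one]
    refine ⟨fun k => ?_, ?_⟩
    · have : exp (-(d * τ) * k ^ 2) ≤ 1 := exp_le_one_iff.2 (by nlinarith [sq_nonneg k])
      linarith
    · rw [lintegral_gaussian hdτ]
      refine ENNReal.ofReal_le_ofReal ?_
      rw [← div_div, sqrt_div (by positivity), div_eq_mul_one_div]
      gcongr
      linarith
  · simp only [pow_one]
    refine ⟨fun k => (abs_mul_exp_neg_mul_sq_le hdτ k).trans ?_, ?_⟩
    · rw [sqrt_mul hd.le, ← one_div_mul_one_div]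
      gcongr
      linarith
    · have hb : 0 < d / 2 * τ := by positivity
      calc ∫⁻ k : ℝ, ENNReal.ofReal (|k| * exp (-(d * τ) * k ^ 2))
          ≤ ∫⁻ k : ℝ, ENNReal.ofReal (1 / √(d / 2 * τ)) *
              ENNReal.ofReal (exp (-(d / 2 * τ) * k ^ 2)) := by
            refine lintegral_mono fun k => ?_
            rw [← ENNReal.ofReal_mul (by positivity)]
            refine ENNReal.ofReal_le_ofReal ?_
            have : -(d * τ) * k ^ 2 = -(d / 2 * τ) * k ^ 2 + -(d / 2 * τ) * k ^ 2 := by ring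
            rw [this, exp_add, ← mul_assoc]
            gcongr
            exact abs_mul_exp_neg_mul_sq_le hb k
        _ = ENNReal.ofReal (1 / √(d / 2 * τ) * √(π / (d / 2 * τ))) := by
            rw [lintegral_const_mul _ (by fun_prop), lintegral_gaussian hb,
              ENNReal.ofReal_mul (by positivity)]
        _ ≤ _ := by
            refine ENNReal.ofReal_le_ofReal ?_
            have : 1 / √(d / 2 * τ) * √(π / (d / 2 * τ)) =
                1 / √(d / 2) * √(π / (d / 2)) * (1 / √τ) ^ 2 := by
              rw [← div_div π, sqrt_div (x := π / (d / 2)) (by positivity), sqrt_mul (by positivity)]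
              field_simp
            rw [this]
            gcongr
            linarith

theorem min_one_div_sqrt_le {t s : ℝ} (hs : 0 ≤ s) (hst : s < t) :
    min (1 / √(t - s)) (1 / √(1 + s)) ≤ 2 * (1 / √(1 + t)) := by
  have key {x : ℝ} (hx : 0 < x) (h : 1 + t ≤ 4 * x) : 1 / √x ≤ 2 * (1 / √(1 + t)) := by
    have h1 : √(1 + t) ≤ 2 * √x := by
      refine sqrt_le_iff.2 ⟨by positivity, ?_⟩
      rw [mul_pow, sq_sqrt hx.le]
      linarith
    have : 0 < √(1 + t) := sqrt_pos.2 (by linarith)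
    have : 0 < √x := sqrt_pos.2 hx
    rw [mul_one_div, div_le_div_iff₀ (by assumption) (by assumption)]
    linarith
  rcases le_total (1 + t) (4 * (t - s)) with h | h
  · exact (min_le_left _ _).trans (key (by linarith) h)
  · exact (min_le_right _ _).trans (key (by linarith) (by linarith))

theorem lintegral_Ioo_ofReal_eq_of_hasDerivAt {t : ℝ} (ht : 0 ≤ t) {F f : ℝ → ℝ}
    (hF : ContinuousOn F (Set.Icc 0 t)) (hd : ∀ s ∈ Set.Ioo 0 t, HasDerivAt F (f s) s)
    (hf : ∀ s ∈ Set.Ioo 0 t, 0 ≤ f s) :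
    ∫⁻ s in Set.Ioo 0 t, ENNReal.ofReal (f s) = ENNReal.ofReal (F t - F 0) := by
  have hi : IntegrableOn f (Set.Ioc 0 t) :=
    intervalIntegral.integrableOn_deriv_of_nonneg hF hd hf
  rw [← intervalIntegral.integral_eq_sub_of_hasDerivAt_of_le ht hF hd
    ((intervalIntegrable_iff_integrableOn_Ioc_of_le ht).2 hi),
    intervalIntegral.integral_of_le ht, integral_Ioc_eq_integral_Ioo,
    ofReal_integral_eq_lintegral_ofReal (hi.mono_set Set.Ioo_subset_Ioc_self)]
  exact (ae_restrict_iff' measurableSet_Ioo).2 (.of_forall hf)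

theorem lintegral_duhamel_weight_le {t : ℝ} (ht : 0 ≤ t) {j : ℕ} (hj : j ≤ 1) :
    ∫⁻ s in Set.Ioo 0 t, ENNReal.ofReal ((1 / √(t - s)) ^ j * (1 / √(1 + s)) ^ 3) ≤
      ENNReal.ofReal (2 * (1 / √(1 + t)) ^ j) := by
  interval_cases j
  · rw [lintegral_Ioo_ofReal_eq_of_hasDerivAt ht (F := fun s => -2 * (1 / √(1 + s)))]
    · refine ENNReal.ofReal_le_ofReal ?_
      have : 0 ≤ 1 / √(1 + t) := by positivity
      simp only [add_zero, sqrt_one]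
      linarith
    · refine ContinuousOn.mul continuousOn_const (ContinuousOn.div continuousOn_const
        (by fun_prop) fun s hs => (sqrt_pos.2 (by linarith [hs.1])).ne')
    · intro s hs
      have h1 : 0 < 1 + s := by linarith [hs.1]
      have hq : 0 < √(1 + s) := sqrt_pos.2 h1
      have := ((((hasDerivAt_id s).const_add 1).sqrt h1.ne').fun_inv hq.ne').const_mul (-2)
      simp only [id, ← one_div] at this
      refine this.congr_deriv ?_
      field_simp
    · intro s hs
      positivity
  · rw [lintegral_Ioo_ofReal_eq_of_hasDerivAt ht
      (F := fun s => -(2 / (1 + t)) * (√(t - s) / √(1 + s)))]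
    · refine ENNReal.ofReal_le_ofReal ?_
      have h2 : 0 < √(1 + t) := sqrt_pos.2 (by linarith)
      have h3 : √(1 + t) ^ 2 = 1 + t := sq_sqrt (by linarith)
      calc -(2 / (1 + t)) * (√(t - t) / √(1 + t)) - -(2 / (1 + t)) * (√(t - 0) / √(1 + 0))
          = 2 / (1 + t) * √t := by simp
        _ ≤ 2 / (1 + t) * √(1 + t) := by gcongr; linarith
        _ = 2 * (1 / √(1 + t)) ^ 1 := by
            nth_rewrite 1 [← h3]
            field_simp
    · refine ContinuousOn.mul continuousOn_const (ContinuousOn.div (by fun_prop)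
        (by fun_prop) fun s hs => (sqrt_pos.2 (by linarith [hs.1])).ne')
    · intro s hs
      have h1 : 0 < 1 + s := by linarith [hs.1]
      have h2 : 0 < t - s := by linarith [hs.2]
      have hq : 0 < √(1 + s) := sqrt_pos.2 h1
      have hp : 0 < √(t - s) := sqrt_pos.2 h2
      have h3 : √(1 + s) ^ 2 = 1 + s := sq_sqrt h1.le
      have h4 : √(t - s) ^ 2 = t - s := sq_sqrt h2.le
      have h5 : 1 + t = √(1 + s) ^ 2 + √(t - s) ^ 2 := by linarith
      have := ((((hasDerivAt_id s).const_sub t).sqrt h2.ne').fun_div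
        (((hasDerivAt_id s).const_add 1).sqrt h1.ne') hq.ne').const_mul (-(2 / (1 + t)))
      simp only [id] at this
      refine this.congr_deriv ?_
      rw [h5]
      field_simp
      ring
    · intro s hs
      positivity

/-- Combination of the `L¹`-`L^∞` and `L^∞`-`L¹` Hölder bounds for the weighted heat multiplier. -/
theorem lintegral_weight_mul_le {w : ℝ → ℝ} (hw : Measurable w) {g : ℝ → ℂ} (hg : Measurable g)
    {S I P L : ℝ≥0∞} (hS : ∀ k, ENNReal.ofReal (w k) ≤ S)
    (hI : ∫⁻ k, ENNReal.ofReal (w k) ≤ I) (hP : ∀ᵐ k, ‖g k‖ₑ ≤ P) (hL : ∫⁻ k, ‖g k‖ₑ ≤ L) :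
    ∫⁻ k, ENNReal.ofReal (w k) * ‖g k‖ₑ ≤ min (I * P) (S * L) := by
  refine le_min ?_ ?_
  · calc ∫⁻ k, ENNReal.ofReal (w k) * ‖g k‖ₑ ≤ ∫⁻ k, ENNReal.ofReal (w k) * P :=
          lintegral_mono_ae (hP.mono fun k hk => by gcongr)
      _ = (∫⁻ k, ENNReal.ofReal (w k)) * P := lintegral_mul_const _ (by fun_prop)
      _ ≤ I * P := by gcongr
  · calc ∫⁻ k, ENNReal.ofReal (w k) * ‖g k‖ₑ ≤ ∫⁻ k, S * ‖g k‖ₑ :=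
          lintegral_mono fun k => by gcongr; exact hS k
      _ = S * ∫⁻ k, ‖g k‖ₑ := lintegral_const_mul _ (by fun_prop)
      _ ≤ S * L := by gcongr

theorem convIter_bounds {f : ℝ → ℂ} (hf : Measurable f) (hi : Integrable f) {δ a : ℝ}
    (hδ : 0 < δ) (hδ1 : δ ≤ 1) (ha : 0 ≤ a) (ha1 : a ≤ 1) (h1 : ∫ k, ‖f k‖ ≤ δ * a)
    (hinf : ∀ᵐ k, ‖f k‖ ≤ δ) {q : ℕ} (hq : 4 ≤ q) :
    (∀ᵐ k, ‖convIter f (q - 1) k‖ₑ ≤ ENNReal.ofReal (δ ^ 2 * a ^ 3)) ∧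
      ∫⁻ k, ‖convIter f (q - 1) k‖ₑ ≤ ENNReal.ofReal (δ ^ 2 * a ^ 4) := by
  have hN : ∫⁻ k, ‖f k‖ₑ ≤ ENNReal.ofReal (δ * a) := by
    rw [← ofReal_integral_norm_eq_lintegral_enorm hi]
    exact ENNReal.ofReal_le_ofReal h1
  have hA : ∀ᵐ k, ‖f k‖ₑ ≤ ENNReal.ofReal δ := hinf.mono fun k hk => by
    rw [← ofReal_norm]
    exact ENNReal.ofReal_le_ofReal hk
  have hp {m n : ℕ} (h : m ≤ n) : a ^ n ≤ a ^ m := pow_le_pow_of_le_one ha ha1 h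
  have hpδ {n : ℕ} (h : 2 ≤ n) : δ ^ n ≤ δ ^ 2 := pow_le_pow_of_le_one hδ.le hδ1 h
  refine ⟨(ae_enorm_convIter_le hf hA (q - 1)).mono fun k hk => hk.trans ?_,
    (lintegral_enorm_convIter_le hf (q - 1)).trans ?_⟩
  · calc ENNReal.ofReal δ * (∫⁻ k, ‖f k‖ₑ) ^ (q - 1)
        ≤ ENNReal.ofReal δ * ENNReal.ofReal (δ * a) ^ (q - 1) := by gcongr
      _ = ENNReal.ofReal (δ ^ (q - 1 + 1) * a ^ (q - 1)) := by
          rw [← ENNReal.ofReal_pow (by positivity), ← ENNReal.ofReal_mul hδ.le, mul_pow, pow_succ]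
          ring_nf
      _ ≤ _ := ENNReal.ofReal_le_ofReal (by
          gcongr ?_ * ?_
          · exact hpδ (by omega)
          · exact hp (by omega))
  · calc (∫⁻ k, ‖f k‖ₑ) ^ (q - 1 + 1) ≤ ENNReal.ofReal (δ * a) ^ (q - 1 + 1) := by gcongr
      _ = ENNReal.ofReal (δ ^ (q - 1 + 1) * a ^ (q - 1 + 1)) := by
          rw [← ENNReal.ofReal_pow (by positivity), mul_pow]
      _ ≤ _ := ENNReal.ofReal_le_ofReal (by
          gcongr ?_ * ?_
          · exact hpδ (by omega)
          · exact hp (by omega))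

theorem integral_weight_mul_norm_intervalIntegral_le {t : ℝ} (ht : 0 ≤ t) {w : ℝ → ℝ}
    (hw : Measurable w) (hw0 : ∀ k, 0 ≤ w k) {G : ℝ → ℝ → ℂ}
    (hG : Measurable (Function.uncurry G)) {R : ℝ} (hR : 0 ≤ R)
    (h : ∫⁻ s in Set.Ioo 0 t, ∫⁻ k, ENNReal.ofReal (w k) * ‖G s k‖ₑ ≤ ENNReal.ofReal R) :
    ∫ k, w k * ‖∫ s in (0 : ℝ)..t, G s k‖ ≤ R := by
  refine (le_norm_self _).trans ((norm_integral_le_lintegral_norm _).trans ?_)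
  refine ENNReal.toReal_le_of_le_ofReal hR (le_trans ?_ h)
  rw [lintegral_lintegral_swap (by
    have : Measurable fun p : ℝ × ℝ => ‖G p.1 p.2‖ₑ := hG.enorm
    unfold Function.uncurry
    fun_prop)]
  refine lintegral_mono fun k => ?_
  have hGk : Measurable fun s => G s k := hG.comp (by fun_prop : Measurable fun s => (s, k))
  rw [norm_mul, norm_norm, Real.norm_of_nonneg (hw0 k), ENNReal.ofReal_mul (hw0 k), ofReal_norm,
    lintegral_const_mul _ (by fun_prop), intervalIntegral.integral_of_le ht,
    ← restrict_Ioo_eq_restrict_Ioc]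
  gcongr
  exact enorm_integral_le_lintegral_enorm _

theorem one_add_rpow_neg_half_eq {x : ℝ} (hx : 0 ≤ x) (n : ℕ) :
    (1 + x) ^ (-(n : ℝ) / 2) = (1 / √(1 + x)) ^ n := by
  rw [one_div, inv_pow, sqrt_eq_rpow, ← rpow_natCast, ← rpow_mul (by linarith),
    ← rpow_neg (by linarith)]
  congr 1
  ring

/-- irrelevant oscillatory Duhamel term: for `q ≥ 4` and `j ∈ {0,1}`,
`∫ |k|^j |∫_0^t e^{-k²d(t-s)+icks} z^{*q}(k,s) ds| dk ≤ C δ² (1+t)^{-(1+j)/2}`. -/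
theorem irrelevant_convolution_power_estimate (d c : ℝ) (hd : 0 < d) (q : ℕ) (hq : 4 ≤ q) :
    ∃ C : ℝ, 1 ≤ C ∧
      ∀ t : ℝ, 0 ≤ t → ∀ δ : ℝ, 0 < δ → δ ≤ 1 →
        ∀ z : ℝ → ℝ → ℂ, Measurable (Function.uncurry z) →
          (∀ s ∈ Set.Icc (0 : ℝ) t,
            Integrable (z s) ∧
            (∫ k : ℝ, ‖z s k‖) ≤ δ * (1 + s) ^ (-(1 : ℝ) / 2) ∧
            (∀ᵐ k : ℝ, ‖z s k‖ ≤ δ)) →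
          ∀ j : ℕ, j ≤ 1 →
            (∫ k : ℝ, |k| ^ j *
                ‖∫ s in (0 : ℝ)..t,
                    expc (-(k ^ 2 * d * (t - s))) (c * k * s) * convIter (z s) (q - 1) k‖) ≤
              C * δ ^ 2 * (1 + t) ^ (-(1 + (j : ℝ)) / 2) := by
  obtain ⟨B, hB, hW⟩ := exists_heat_weight_bounds hd
  refine ⟨4 * B, by linarith, fun t ht δ hδ hδ1 z hz hzs j hj => ?_⟩
  have hexp : (1 + t) ^ (-(1 + (j : ℝ)) / 2) = (1 / √(1 + t)) ^ (j + 1) := by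
    rw [← one_add_rpow_neg_half_eq ht]
    push_cast
    ring_nf
  rw [hexp]
  have hconv := measurable_uncurry_convIter hz (q - 1)
  refine integral_weight_mul_norm_intervalIntegral_le ht (by fun_prop) (fun k => by positivity)
    (G := fun s k => expc (-(k ^ 2 * d * (t - s))) (c * k * s) * convIter (z s) (q - 1) k)
    ?_ (by positivity) ?_
  · refine Measurable.mul ?_ hconv
    unfold expc
    fun_prop
  calc
    _ ≤ ∫⁻ s in Set.Ioo 0 t, ENNReal.ofReal (2 * B * δ ^ 2 * (1 / √(1 + t))) *
          ENNReal.ofReal ((1 / √(t - s)) ^ j * (1 / √(1 + s)) ^ 3) := by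
        refine setLIntegral_mono' measurableSet_Ioo fun s hs => ?_
        obtain ⟨hi, h1, hinf⟩ := hzs s ⟨hs.1.le, hs.2.le⟩
        have hzm : Measurable (z s) := hz.comp (by fun_prop : Measurable fun k => (s, k))
        have ha := one_add_rpow_neg_half_eq hs.1.le 1
        simp only [Nat.cast_one, pow_one] at ha
        rw [ha] at h1
        have ha1 : 1 / √(1 + s) ≤ 1 := by
          rw [div_le_one (sqrt_pos.2 (by linarith [hs.1])), one_le_sqrt]
          linarith [hs.1]
        obtain ⟨hP, hL⟩ := convIter_bounds hzm hi hδ hδ1 (by positivity) ha1 h1 hinf hq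
        obtain ⟨hS, hI⟩ := hW j hj (t - s) (sub_pos.2 hs.2)
        have hmin := min_one_div_sqrt_le hs.1.le hs.2
        have key := lintegral_weight_mul_le (by fun_prop) (measurable_convIter hzm (q - 1))
          (fun k => ENNReal.ofReal_le_ofReal (hS k)) hI hP hL
        set u := 1 / √(t - s)
        set a := 1 / √(1 + s)
        have hu : 0 ≤ u := by positivity
        have ha0 : 0 ≤ a := by positivity
        refine le_trans (le_of_eq ?_) (key.trans ?_)
        · refine lintegral_congr fun k => ?_
          rw [enorm_mul, ← ofReal_norm (expc _ _), norm_expc, ← mul_assoc,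
            ← ENNReal.ofReal_mul (by positivity)]
        · rw [← ENNReal.ofReal_mul (by positivity), ← ENNReal.ofReal_mul (by positivity),
            ← ENNReal.ofReal_mul (by positivity), ← ENNReal.ofReal_min]
          refine ENNReal.ofReal_le_ofReal ?_
          calc min (B * u ^ (j + 1) * (δ ^ 2 * a ^ 3)) (B * u ^ j * (δ ^ 2 * a ^ 4))
              = B * u ^ j * δ ^ 2 * a ^ 3 * min u a := by
                rw [mul_min_of_nonneg _ _ (by positivity)]
                ring_nf
            _ ≤ B * u ^ j * δ ^ 2 * a ^ 3 * (2 * (1 / √(1 + t))) := by gcongr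
            _ = _ := by ring
    _ ≤ ENNReal.ofReal (2 * B * δ ^ 2 * (1 / √(1 + t))) *
          ENNReal.ofReal (2 * (1 / √(1 + t)) ^ j) := by
        rw [lintegral_const_mul _ (by fun_prop)]
        gcongr
        exact lintegral_duhamel_weight_le ht hj
    _ = ENNReal.ofReal (4 * B * δ ^ 2 * (1 / √(1 + t)) ^ (j + 1)) := by
        rw [← ENNReal.ofReal_mul (by positivity)]
        ring_nf
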